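/- Let ℓ ∈ 𝕃, ν ∈ (0,1], and let {λ_t} be boosting iterates whose steps satisfy α_qub_i ≤ α_i ≤ α_opt_i for every i ≥ 1 (where α_qub_i := ν·γ_i/C_i⁴ and α_opt_i := ν times a minimizer of α ↦ L(A(λ_{i−1} + α·v_i))). Then for all integers t > t₀ ≥ 0: L(Aλ_t) ≤ L(Aλ_{t₀})·exp(−(ν(2−ν)/(2·C_{t₀+1}⁶))·Σ_{i=t₀+1}^{t} γ_i²). -/

import Mathlib

open Real Finset

noncomputable section

/-- The property that `C` is a valid curvature constant at level `z`:
`C ≥ 1` and `C⁻¹ ≤ eˣ / ℓ⁽ⁱ⁾(x) ≤ C` for all `x ≤ z` and `i ∈ {0,1,2}`. -/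
def CBound (ℓ : ℝ → ℝ) (z C : ℝ) : Prop :=
  1 ≤ C ∧ ∀ x ≤ z, ∀ i ≤ 2,
    C⁻¹ ≤ Real.exp x / iteratedDeriv i ℓ x ∧ Real.exp x / iteratedDeriv i ℓ x ≤ C

/-- `C_ℓ(z)`: the least valid curvature constant at level `z`. -/
def Cconst (ℓ : ℝ → ℝ) (z : ℝ) : ℝ := sInf {C : ℝ | CBound ℓ z C}

/-- Membership in the class `𝕃`: positive, twice continuously differentiable,
strictly convex, and `C_ℓ(z) < ∞` (i.e. some valid constant exists) for every `z`. -/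
def MemL (ℓ : ℝ → ℝ) : Prop :=
  (∀ x, 0 < ℓ x) ∧ ContDiff ℝ 2 ℓ ∧ StrictConvexOn ℝ Set.univ ℓ ∧
    ∀ z : ℝ, ∃ C : ℝ, CBound ℓ z C

/-- Membership in `𝕃_∞`: in `𝕃` and moreover `C_ℓ(z) → 1` as `z → −∞`. -/
def MemLinf (ℓ : ℝ → ℝ) : Prop :=
  MemL ℓ ∧ Filter.Tendsto (Cconst ℓ) Filter.atBot (nhds 1)

variable {m n : ℕ}

/-- The empirical risk `L(Aλ) = (1/m) Σᵢ ℓ((Aλ)ᵢ)`. -/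
def LL (ℓ : ℝ → ℝ) (A : Matrix (Fin m) (Fin n) ℝ) (lam : Fin n → ℝ) : ℝ :=
  (∑ i, ℓ (A.mulVec lam i)) / m

/-- The gradient vector `∇L(Aλ)`, with `i`-th entry `ℓ'((Aλ)ᵢ)/m`. -/
def gradL (ℓ : ℝ → ℝ) (A : Matrix (Fin m) (Fin n) ℝ) (lam : Fin n → ℝ) : Fin m → ℝ :=
  fun i => deriv ℓ (A.mulVec lam i) / m

/-- `‖Aᵀ ∇L(Aλ)‖_∞`. -/
def gInf (ℓ : ℝ → ℝ) (A : Matrix (Fin m) (Fin n) ℝ) (lam : Fin n → ℝ) : ℝ :=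
  ⨆ j : Fin n, |∑ i, gradL ℓ A lam i * A i j|

/-- `‖∇L(Aλ)‖₁`. -/
def gOne (ℓ : ℝ → ℝ) (A : Matrix (Fin m) (Fin n) ℝ) (lam : Fin n → ℝ) : ℝ :=
  ∑ i, |gradL ℓ A lam i|

/-- `γ̂ = ‖Aᵀ∇L(Aλ)‖_∞ / ‖∇L(Aλ)‖₁`. -/
def gammaHat (ℓ : ℝ → ℝ) (A : Matrix (Fin m) (Fin n) ℝ) (lam : Fin n → ℝ) : ℝ :=
  gInf ℓ A lam / gOne ℓ A lam

/-- `C = C_ℓ(ℓ⁻¹(m · L(Aλ)))`. -/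
def Cstep (ℓ : ℝ → ℝ) (A : Matrix (Fin m) (Fin n) ℝ) (lam : Fin n → ℝ) : ℝ :=
  Cconst ℓ (Function.invFun ℓ ((m : ℝ) * LL ℓ A lam))

/-- The (minimum `l¹`) margin `M(Aλ) = min_k (−(Aλ)_k) / ‖λ‖₁`. -/
def margin (A : Matrix (Fin m) (Fin n) ℝ) (lam : Fin n → ℝ) : ℝ :=
  ⨅ k : Fin m, (-(A.mulVec lam k)) / (∑ j, |lam j|)

/-- The maximum margin `γ = max_{‖λ‖₁=1} min_i (−(Aλ)ᵢ)`. -/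
def gammaMax (A : Matrix (Fin m) (Fin n) ℝ) : ℝ :=
  sSup {r : ℝ | ∃ lam : Fin n → ℝ, (∑ j, |lam j|) = 1 ∧ r = ⨅ i : Fin m, -(A.mulVec lam i)}

/-- Boosting iterates: `λ₀ = 0`, `λ_t = λ_{t-1} + α_t • v_t` where `v_t` is a signed
standard basis vector satisfying `∇L(Aλ_{t-1})ᵀ A v_t = −‖Aᵀ∇L(Aλ_{t-1})‖_∞`. -/
def IsBoostSeq (ℓ : ℝ → ℝ) (A : Matrix (Fin m) (Fin n) ℝ)
    (lam : ℕ → Fin n → ℝ) (α : ℕ → ℝ) (v : ℕ → Fin n → ℝ) : Prop :=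
  lam 0 = 0 ∧
  (∀ t : ℕ, 1 ≤ t → lam t = lam (t-1) + α t • v t) ∧
  (∀ t : ℕ, 1 ≤ t → ∃ s : ℝ, (s = 1 ∨ s = -1) ∧ ∃ j : Fin n, v t = s • (Pi.single j (1:ℝ) : Fin n → ℝ)) ∧
  (∀ t : ℕ, 1 ≤ t →
    ∑ i, gradL ℓ A (lam (t-1)) i * A.mulVec (v t) i = - gInf ℓ A (lam (t-1)))

/-- The quantity `Υ_ν(γ)`. -/
def Upsilon (ν γ : ℝ) : ℝ :=
  ((2/ν) * Real.log 2 - (2/ν) * Real.log ((1+γ) ^ (1-ν) + (1-γ) ^ (1-ν))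
      - Real.log (1-γ^2)) /
    (Real.log (1+γ) - Real.log (1-γ))

/-!
Along the search direction `b ↦ L(A(λ + b v))` is convex, so it decreases up to its minimizer;
taking the quadratic-upper-bound step `q = νγ/C⁴` in place of the actual step can therefore only
increase the risk. Positivity of `ℓ` bounds every coordinate `(Aμ)ᵢ` with `L(Aμ) ≤ L(Aλ)` by
`ℓ⁻¹(m L(Aλ))`, where `ℓ`, `ℓ'` and `ℓ''` agree with `exp`, each up to a factor `C`, hence with one
another up to `C²`. On `[0, q]` the second derivative is thus at most `C² L(Aλ) ≤ C⁴ ‖∇L(Aλ)‖₁`,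
and the quadratic Taylor bound at `q`, whose minimizer corresponds to `ν = 1`, contracts the risk
by the factor `1 - ν(2 - ν)γ² / (2C⁶)`. The risk decreases along the iterates, so `C` does as well,
and the contractions compose with the constant of the initial iterate.
-/

section Calculus

lemma antitoneOn_inter_Iic_of_convexOn_of_isMinOn {𝕜 β : Type*} [Field 𝕜] [LinearOrder 𝕜]
    [IsStrictOrderedRing 𝕜] [AddCommGroup β] [LinearOrder β] [IsOrderedAddMonoid β] [Module 𝕜 β]
    [IsStrictOrderedModule 𝕜 β] {s : Set 𝕜} {f : 𝕜 → β} {a : 𝕜} (hf : ConvexOn 𝕜 s f) (ha : a ∈ s)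
    (hmin : IsMinOn f s a) : AntitoneOn f (s ∩ Set.Iic a) := by
  rintro x ⟨hx, -⟩ y ⟨-, hya⟩ hxy
  exact (hf.le_max_of_mem_Icc hx ha ⟨hxy, hya⟩).trans (max_le le_rfl (hmin hx))

lemma le_quadratic_of_hasDerivAt2_le {f f' f'' : ℝ → ℝ} {a b K : ℝ} (hab : a ≤ b)
    (hf : ∀ x ∈ Set.Icc a b, HasDerivAt f (f' x) x)
    (hf' : ∀ x ∈ Set.Icc a b, HasDerivAt f' (f'' x) x)
    (hK : ∀ x ∈ Set.Icc a b, f'' x ≤ K) :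
    f b ≤ f a + f' a * (b - a) + K / 2 * (b - a) ^ 2 := by
  obtain rfl | hlt := hab.eq_or_lt
  · simp
  -- `K / 2 * (x - a) ^ 2 - f x` is convex, so it lies above its tangent line at `a`.
  have hg (x) (hx : x ∈ Set.Icc a b) :
      HasDerivAt (fun x ↦ K / 2 * (x - a) ^ 2 - f x) (K * (x - a) - f' x) x := by
    refine ((((hasDerivAt_id x).sub_const a).pow 2).const_mul (K / 2)
      |>.sub (hf x hx)).congr_deriv ?_
    simp only [id_eq]
    ring
  have hg' (x) (hx : x ∈ Set.Icc a b) :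
      HasDerivAt (fun x ↦ K * (x - a) - f' x) (K - f'' x) x := by
    refine ((((hasDerivAt_id x).sub_const a).const_mul K).sub (hf' x hx)).congr_deriv ?_
    rw [mul_one]
  have hconv : ConvexOn ℝ (Set.Icc a b) fun x ↦ K / 2 * (x - a) ^ 2 - f x :=
    convexOn_of_hasDerivWithinAt2_nonneg (convex_Icc a b)
      (fun x hx ↦ (hg x hx).continuousAt.continuousWithinAt)
      (fun x hx ↦ (hg x (interior_subset hx)).hasDerivWithinAt)
      (fun x hx ↦ (hg' x (interior_subset hx)).hasDerivWithinAt)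
      (fun x hx ↦ sub_nonneg.2 (hK x (interior_subset hx)))
  have ha : a ∈ Set.Icc a b := Set.left_mem_Icc.2 hab
  have htangent := hconv.le_slope_of_hasDerivAt ha (Set.right_mem_Icc.2 hab) hlt (hg a ha)
  rw [slope_def_field, le_div_iff₀ (sub_pos.2 hlt)] at htangent
  linarith

lemma le_mul_exp_neg_sum_of_le_mul_one_sub {a d : ℕ → ℝ} {s t : ℕ} (hst : s ≤ t)
    (ha : ∀ k, s ≤ k → 0 ≤ a k) (h : ∀ k, s ≤ k → a (k + 1) ≤ a k * (1 - d k)) :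
    a t ≤ a s * exp (-∑ k ∈ Finset.Ico s t, d k) := by
  have hrec (k) (hk : k ≥ s) : a (k + 1) ≤ exp (-d k) * a k + 0 := by
    rw [add_zero, mul_comm]
    exact (h k hk).trans (mul_le_mul_of_nonneg_left (one_sub_le_exp_neg _) (ha k hk))
  simpa [← exp_sum] using discrete_gronwall_prod_general hrec (fun _ _ ↦ (exp_pos _).le) hst

end Calculus

section CurvatureConstant

variable {ℓ : ℝ → ℝ} {x y z z' C : ℝ} {i j : ℕ}

namespace CBound

lemma pos (hC : CBound ℓ z C) : 0 < C := one_pos.trans_le hC.1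

lemma mono (hC : CBound ℓ z' C) (hz : z ≤ z') : CBound ℓ z C :=
  ⟨hC.1, fun x hx ↦ hC.2 x (hx.trans hz)⟩

lemma iteratedDeriv_pos (hC : CBound ℓ z C) (hx : x ≤ z) (hi : i ≤ 2) :
    0 < iteratedDeriv i ℓ x :=
  (div_pos_iff_of_pos_left (exp_pos x)).1 ((inv_pos.2 hC.pos).trans_le (hC.2 x hx i hi).1)

lemma iteratedDeriv_le_mul_exp (hC : CBound ℓ z C) (hx : x ≤ z) (hi : i ≤ 2) :
    iteratedDeriv i ℓ x ≤ C * exp x := by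
  have h := (hC.2 x hx i hi).1
  rwa [le_div_iff₀ (hC.iteratedDeriv_pos hx hi), inv_mul_le_iff₀ hC.pos] at h

lemma exp_le_mul_iteratedDeriv (hC : CBound ℓ z C) (hx : x ≤ z) (hi : i ≤ 2) :
    exp x ≤ C * iteratedDeriv i ℓ x :=
  (div_le_iff₀ (hC.iteratedDeriv_pos hx hi)).1 (hC.2 x hx i hi).2

lemma iteratedDeriv_le_sq_mul (hC : CBound ℓ z C) (hx : x ≤ z) (hi : i ≤ 2) (hj : j ≤ 2) :
    iteratedDeriv i ℓ x ≤ C ^ 2 * iteratedDeriv j ℓ x :=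
  calc iteratedDeriv i ℓ x ≤ C * exp x := hC.iteratedDeriv_le_mul_exp hx hi
    _ ≤ C * (C * iteratedDeriv j ℓ x) :=
        mul_le_mul_of_nonneg_left (hC.exp_le_mul_iteratedDeriv hx hj) hC.pos.le
    _ = C ^ 2 * iteratedDeriv j ℓ x := by ring

end CBound

lemma cBound_Cconst (hℓ : ∃ C, CBound ℓ z C) : CBound ℓ z (Cconst ℓ z) := by
  refine ⟨le_csInf hℓ fun C hC ↦ hC.1, fun x hx i hi ↦
    ⟨?_, le_csInf hℓ fun C hC ↦ (hC.2 x hx i hi).2⟩⟩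
  obtain ⟨C₀, hC₀⟩ := hℓ
  refine inv_le_of_inv_le₀ (div_pos (exp_pos x) (hC₀.iteratedDeriv_pos hx hi)) ?_
  exact le_csInf ⟨C₀, hC₀⟩ fun C hC ↦ inv_le_of_inv_le₀ hC.pos (hC.2 x hx i hi).1

lemma Cconst_le_Cconst (hℓ : ∃ C, CBound ℓ z' C) (hz : z ≤ z') : Cconst ℓ z ≤ Cconst ℓ z' :=
  csInf_le ⟨1, fun _ hC ↦ hC.1⟩ ((cBound_Cconst hℓ).mono hz)

namespace MemL

lemma deriv_pos (hℓ : MemL ℓ) (x : ℝ) : 0 < deriv ℓ x := by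
  obtain ⟨C, hC⟩ := hℓ.2.2.2 x
  simpa only [iteratedDeriv_one] using hC.iteratedDeriv_pos le_rfl one_le_two

lemma strictMono (hℓ : MemL ℓ) : StrictMono ℓ := strictMono_of_deriv_pos hℓ.deriv_pos

lemma differentiable (hℓ : MemL ℓ) : Differentiable ℝ ℓ := hℓ.2.1.differentiable two_ne_zero

lemma tendsto_atBot (hℓ : MemL ℓ) : Filter.Tendsto ℓ Filter.atBot (nhds 0) := by
  obtain ⟨C, hC⟩ := hℓ.2.2.2 0
  refine squeeze_zero' (.of_forall fun x ↦ (hℓ.1 x).le) ?_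
    (by simpa using tendsto_exp_atBot.const_mul C)
  filter_upwards [Filter.eventually_le_atBot 0] with x hx
  simpa only [iteratedDeriv_zero] using hC.iteratedDeriv_le_mul_exp hx zero_le_two

lemma tendsto_atTop (hℓ : MemL ℓ) : Filter.Tendsto ℓ Filter.atTop Filter.atTop := by
  refine Filter.tendsto_atTop_mono' _ ?_ (Filter.tendsto_id.const_mul_atTop (hℓ.deriv_pos 0))
  filter_upwards [Filter.eventually_gt_atTop 0] with x hx
  have htangent := hℓ.2.2.1.convexOn.le_slope_of_hasDerivAt (Set.mem_univ 0) (Set.mem_univ x) hx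
    (hℓ.differentiable 0).hasDerivAt
  rw [slope_def_field, sub_zero, le_div_iff₀ hx] at htangent
  exact htangent.trans (sub_le_self _ (hℓ.1 0).le)

lemma apply_invFun (hℓ : MemL ℓ) (hy : 0 < y) : ℓ (Function.invFun ℓ y) = y := by
  refine Function.invFun_eq ?_
  obtain ⟨x, -, hx⟩ := isPreconnected_univ.intermediate_value_Ioi (by simp) (by simp)
    hℓ.2.1.continuous.continuousOn hℓ.tendsto_atBot hℓ.tendsto_atTop hy
  exact ⟨x, hx⟩

lemma invFun_le_invFun (hℓ : MemL ℓ) (hx : 0 < x) (hxy : x ≤ y) :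
    Function.invFun ℓ x ≤ Function.invFun ℓ y := by
  rwa [← hℓ.strictMono.le_iff_le, hℓ.apply_invFun hx, hℓ.apply_invFun (hx.trans_le hxy)]

end MemL

end CurvatureConstant

section Risk

variable {ℓ : ℝ → ℝ} {A : Matrix (Fin m) (Fin n) ℝ} {l l' v : Fin n → ℝ}

lemma hasDerivAt_comp_mulVec_add_smul {f : ℝ → ℝ} {f' b : ℝ} {i : Fin m}
    (hf : HasDerivAt f f' (A.mulVec (l + b • v) i)) :
    HasDerivAt (fun b : ℝ ↦ f (A.mulVec (l + b • v) i)) (f' * A.mulVec v i) b := by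
  refine hf.comp b ?_
  simp only [Matrix.mulVec_add, Matrix.mulVec_smul, Pi.add_apply, Pi.smul_apply, smul_eq_mul]
  exact (hasDerivAt_mul_const _).const_add _

lemma hasDerivAt_LL_add_smul (hℓ : Differentiable ℝ ℓ) (b : ℝ) :
    HasDerivAt (fun b : ℝ ↦ LL ℓ A (l + b • v))
      (∑ i, gradL ℓ A (l + b • v) i * A.mulVec v i) b := by
  simp only [LL, gradL, div_mul_eq_mul_div, ← Finset.sum_div]
  exact (HasDerivAt.fun_sum fun i _ ↦
    hasDerivAt_comp_mulVec_add_smul (hℓ _).hasDerivAt).div_const _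

lemma hasDerivAt_sum_gradL_add_smul (hℓ : Differentiable ℝ (deriv ℓ)) (b : ℝ) :
    HasDerivAt (fun b : ℝ ↦ ∑ i, gradL ℓ A (l + b • v) i * A.mulVec v i)
      ((∑ i, iteratedDeriv 2 ℓ (A.mulVec (l + b • v) i) * A.mulVec v i ^ 2) / m) b := by
  simp only [gradL, div_mul_eq_mul_div, ← Finset.sum_div, sq, ← mul_assoc, iteratedDeriv_succ,
    iteratedDeriv_zero]
  exact (HasDerivAt.fun_sum fun i _ ↦
    (hasDerivAt_comp_mulVec_add_smul (hℓ _).hasDerivAt).mul_const _).div_const _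

lemma convexOn_LL (hℓ : ConvexOn ℝ Set.univ ℓ) : ConvexOn ℝ Set.univ (LL ℓ A) := by
  refine ⟨convex_univ, fun l _ l' _ s t hs ht hst ↦ ?_⟩
  simp only [LL, smul_eq_mul, ← mul_div_assoc, ← add_div, Finset.mul_sum,
    ← Finset.sum_add_distrib, Matrix.mulVec_add, Matrix.mulVec_smul]
  gcongr with i
  exact hℓ.2 (Set.mem_univ _) (Set.mem_univ _) hs ht hst

lemma convexOn_LL_add_smul (hℓ : ConvexOn ℝ Set.univ ℓ) :
    ConvexOn ℝ Set.univ fun b : ℝ ↦ LL ℓ A (l + b • v) := by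
  simpa [Function.comp_def, AffineMap.lineMap_apply, add_comm] using
    (convexOn_LL (A := A) hℓ).comp_affineMap (AffineMap.lineMap l (v + l))

lemma gammaHat_nonneg : 0 ≤ gammaHat ℓ A l :=
  div_nonneg (iSup_nonneg fun _ ↦ abs_nonneg _) (Finset.sum_nonneg fun _ _ ↦ abs_nonneg _)

lemma le_of_qub_le_of_le_mul {ν a astar : ℝ} (hν : ν ∈ Set.Ioc 0 1)
    (hqub : ν * (gammaHat ℓ A l / Cstep ℓ A l ^ 4) ≤ a) (hopt : a ≤ ν * astar) : a ≤ astar := by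
  have hqub_nonneg : 0 ≤ ν * (gammaHat ℓ A l / Cstep ℓ A l ^ 4) :=
    mul_nonneg hν.1.le (div_nonneg gammaHat_nonneg (Even.pow_nonneg ⟨2, rfl⟩ _))
  have hastar : 0 ≤ astar := nonneg_of_mul_nonneg_right ((hqub_nonneg.trans hqub).trans hopt) hν.1
  exact hopt.trans (mul_le_of_le_one_left hastar hν.2)

namespace MemL

lemma LL_pos (hℓ : MemL ℓ) (hm : 0 < m) (A : Matrix (Fin m) (Fin n) ℝ) (l : Fin n → ℝ) :
    0 < LL ℓ A l := by
  have : Nonempty (Fin m) := ⟨⟨0, hm⟩⟩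
  exact div_pos (Finset.sum_pos (fun i _ ↦ hℓ.1 _) Finset.univ_nonempty) (Nat.cast_pos.2 hm)

lemma abs_gradL (hℓ : MemL ℓ) (i : Fin m) : |gradL ℓ A l i| = deriv ℓ (A.mulVec l i) / m :=
  abs_of_nonneg (div_nonneg (hℓ.deriv_pos _).le m.cast_nonneg)

lemma gammaHat_mul_gOne (hℓ : MemL ℓ) (hm : 0 < m) :
    gammaHat ℓ A l * gOne ℓ A l = gInf ℓ A l := by
  have : Nonempty (Fin m) := ⟨⟨0, hm⟩⟩
  have hpos : 0 < gOne ℓ A l := Finset.sum_pos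
    (fun i _ ↦ by rw [hℓ.abs_gradL]; exact div_pos (hℓ.deriv_pos _) (Nat.cast_pos.2 hm))
    Finset.univ_nonempty
  exact div_mul_cancel₀ _ hpos.ne'

lemma cBound_Cstep (hℓ : MemL ℓ) (A : Matrix (Fin m) (Fin n) ℝ) (l : Fin n → ℝ) :
    CBound ℓ (Function.invFun ℓ (m * LL ℓ A l)) (Cstep ℓ A l) :=
  cBound_Cconst (hℓ.2.2.2 _)

lemma Cstep_le_Cstep (hℓ : MemL ℓ) (hm : 0 < m) (h : LL ℓ A l ≤ LL ℓ A l') :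
    Cstep ℓ A l ≤ Cstep ℓ A l' := by
  have hm' : (0 : ℝ) < m := Nat.cast_pos.2 hm
  exact Cconst_le_Cconst (hℓ.2.2.2 _) (hℓ.invFun_le_invFun (mul_pos hm' (hℓ.LL_pos hm A l))
    (mul_le_mul_of_nonneg_left h hm'.le))

-- The loss of a single example is at most the total loss `m * LL`.
lemma mulVec_le_invFun (hℓ : MemL ℓ) (h : LL ℓ A l' ≤ LL ℓ A l) (i : Fin m) :
    A.mulVec l' i ≤ Function.invFun ℓ (m * LL ℓ A l) := by
  have hm : (0 : ℝ) < m := Nat.cast_pos.2 i.pos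
  rw [← hℓ.strictMono.le_iff_le, hℓ.apply_invFun (mul_pos hm (hℓ.LL_pos i.pos A l))]
  calc ℓ (A.mulVec l' i) ≤ ∑ k, ℓ (A.mulVec l' k) :=
        Finset.single_le_sum (fun k _ ↦ (hℓ.1 _).le) (Finset.mem_univ i)
    _ = m * LL ℓ A l' := (mul_div_cancel₀ _ hm.ne').symm
    _ ≤ m * LL ℓ A l := mul_le_mul_of_nonneg_left h hm.le

lemma LL_le_sq_mul_gOne (hℓ : MemL ℓ) : LL ℓ A l ≤ Cstep ℓ A l ^ 2 * gOne ℓ A l := by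
  simp only [LL, gOne, hℓ.abs_gradL, ← Finset.sum_div, ← mul_div_assoc, Finset.mul_sum]
  gcongr with i
  simpa only [iteratedDeriv_zero, iteratedDeriv_one] using
    (hℓ.cBound_Cstep A l).iteratedDeriv_le_sq_mul (hℓ.mulVec_le_invFun le_rfl i)
      zero_le_two one_le_two

lemma sum_iteratedDeriv_two_mul_sq_le (hℓ : MemL ℓ) {w : Fin m → ℝ} (hw : ∀ i, |w i| ≤ 1)
    (h : LL ℓ A l' ≤ LL ℓ A l) :
    (∑ i, iteratedDeriv 2 ℓ (A.mulVec l' i) * w i ^ 2) / m ≤ Cstep ℓ A l ^ 4 * gOne ℓ A l :=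
  calc (∑ i, iteratedDeriv 2 ℓ (A.mulVec l' i) * w i ^ 2) / m
      ≤ Cstep ℓ A l ^ 2 * LL ℓ A l' := by
        rw [LL, ← mul_div_assoc, Finset.mul_sum]
        refine div_le_div_of_nonneg_right (Finset.sum_le_sum fun i _ ↦ ?_) m.cast_nonneg
        have hz := hℓ.mulVec_le_invFun h i
        have hC := hℓ.cBound_Cstep A l
        refine (mul_le_of_le_one_right (hC.iteratedDeriv_pos hz le_rfl).le
          ((sq_le_one_iff_abs_le_one _).2 (hw i))).trans ?_
        simpa only [iteratedDeriv_zero] using hC.iteratedDeriv_le_sq_mul hz le_rfl zero_le_two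
    _ ≤ Cstep ℓ A l ^ 2 * (Cstep ℓ A l ^ 2 * gOne ℓ A l) := by
        gcongr
        exact h.trans hℓ.LL_le_sq_mul_gOne
    _ = Cstep ℓ A l ^ 4 * gOne ℓ A l := by ring

lemma LL_add_smul_le_quadratic (hℓ : MemL ℓ) (hv : ∀ i, |A.mulVec v i| ≤ 1) {q : ℝ} (hq : 0 ≤ q)
    (h : LL ℓ A (l + q • v) ≤ LL ℓ A l) :
    LL ℓ A (l + q • v) ≤ LL ℓ A l + (∑ i, gradL ℓ A l i * A.mulVec v i) * q
      + Cstep ℓ A l ^ 4 * gOne ℓ A l / 2 * q ^ 2 := by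
  have hdescent (b) (hb : b ∈ Set.Icc 0 q) : LL ℓ A (l + b • v) ≤ LL ℓ A l := by
    have := (convexOn_LL_add_smul (A := A) (l := l) (v := v) hℓ.2.2.1.convexOn).le_max_of_mem_Icc
      (Set.mem_univ 0) (Set.mem_univ q) hb
    simpa [h] using this
  simpa using le_quadratic_of_hasDerivAt2_le hq
    (fun b _ ↦ hasDerivAt_LL_add_smul (A := A) (l := l) (v := v) hℓ.differentiable b)
    (fun b _ ↦ hasDerivAt_sum_gradL_add_smul hℓ.2.1.differentiable_deriv_two b)
    (fun b hb ↦ hℓ.sum_iteratedDeriv_two_mul_sq_le hv (hdescent b hb))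

lemma LL_add_smul_le_mul_one_sub (hℓ : MemL ℓ) (hv : ∀ i, |A.mulVec v i| ≤ 1)
    {ν γ α αstar : ℝ} (hν : ν ∈ Set.Icc 0 2) (hγ : 0 ≤ γ)
    (hedge : ∑ i, gradL ℓ A l i * A.mulVec v i ≤ -(γ * gOne ℓ A l))
    (hmin : ∀ β : ℝ, LL ℓ A (l + αstar • v) ≤ LL ℓ A (l + β • v))
    (hα : ν * (γ / Cstep ℓ A l ^ 4) ≤ α) (hα' : α ≤ αstar) :
    LL ℓ A (l + α • v) ≤ LL ℓ A l * (1 - ν * (2 - ν) / (2 * Cstep ℓ A l ^ 6) * γ ^ 2) := by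
  set C := Cstep ℓ A l
  set q := ν * (γ / C ^ 4) with hq_def
  have hC : 0 < C := (hℓ.cBound_Cstep A l).pos
  have hq : 0 ≤ q := mul_nonneg hν.1 (by positivity)
  have hanti : AntitoneOn (fun b : ℝ ↦ LL ℓ A (l + b • v)) (Set.univ ∩ Set.Iic αstar) :=
    antitoneOn_inter_Iic_of_convexOn_of_isMinOn (convexOn_LL_add_smul hℓ.2.2.1.convexOn)
      (Set.mem_univ _) fun β _ ↦ hmin β
  have hle (b) (hb : b ≤ αstar) : b ∈ Set.univ ∩ Set.Iic αstar := ⟨Set.mem_univ b, hb⟩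
  have hqα : q ≤ αstar := hα.trans hα'
  have hq_descent : LL ℓ A (l + q • v) ≤ LL ℓ A l := by
    simpa using hanti (hle 0 (hq.trans hqα)) (hle q hqα) hq
  calc LL ℓ A (l + α • v) ≤ LL ℓ A (l + q • v) := hanti (hle q hqα) (hle α hα') hα
    _ ≤ LL ℓ A l + (∑ i, gradL ℓ A l i * A.mulVec v i) * q + C ^ 4 * gOne ℓ A l / 2 * q ^ 2 :=
        hℓ.LL_add_smul_le_quadratic hv hq hq_descent
    _ ≤ LL ℓ A l + -(γ * gOne ℓ A l) * q + C ^ 4 * gOne ℓ A l / 2 * q ^ 2 := by gcongr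
    _ = LL ℓ A l - ν * (2 - ν) / (2 * C ^ 6) * γ ^ 2 * (C ^ 2 * gOne ℓ A l) := by
        rw [hq_def]; field_simp; ring
    _ ≤ LL ℓ A l - ν * (2 - ν) / (2 * C ^ 6) * γ ^ 2 * LL ℓ A l := by
        have hrate : 0 ≤ ν * (2 - ν) := mul_nonneg hν.1 (sub_nonneg.2 hν.2)
        gcongr
        exact hℓ.LL_le_sq_mul_gOne
    _ = LL ℓ A l * (1 - ν * (2 - ν) / (2 * C ^ 6) * γ ^ 2) := by ring

end MemL

namespace IsBoostSeq

variable {lam v : ℕ → Fin n → ℝ} {α : ℕ → ℝ} {t : ℕ}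

lemma abs_mulVec_le_one (hseq : IsBoostSeq ℓ A lam α v) (hA : ∀ i j, |A i j| ≤ 1) (ht : 1 ≤ t)
    (i : Fin m) : |A.mulVec (v t) i| ≤ 1 := by
  obtain ⟨s, hs, j, hv⟩ := hseq.2.2.1 t ht
  have hs : |s| = 1 := abs_eq zero_le_one |>.2 hs
  simpa [hv, Matrix.mulVec_smul, abs_mul, hs] using hA i j

lemma sum_gradL_mul_mulVec (hseq : IsBoostSeq ℓ A lam α v) (hm : 0 < m) (hℓ : MemL ℓ)
    (ht : 1 ≤ t) :
    ∑ i, gradL ℓ A (lam (t - 1)) i * A.mulVec (v t) i =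
      -(gammaHat ℓ A (lam (t - 1)) * gOne ℓ A (lam (t - 1))) := by
  rw [hℓ.gammaHat_mul_gOne hm, hseq.2.2.2 t ht]

end IsBoostSeq

end Risk

theorem risk_conv_qub_opt_general {m n : ℕ} (hm : 0 < m) (A : Matrix (Fin m) (Fin n) ℝ)
    {ℓ : ℝ → ℝ} (hℓ : MemL ℓ) {ν : ℝ} (hν : ν ∈ Set.Icc (0 : ℝ) 2)
    {lam v : ℕ → Fin n → ℝ} {α αstar γ : ℕ → ℝ}
    (hlam : ∀ k, lam (k + 1) = lam k + α k • v k) (hv : ∀ k i, |A.mulVec (v k) i| ≤ 1)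
    (hγ : ∀ k, 0 ≤ γ k)
    (hedge : ∀ k, ∑ i, gradL ℓ A (lam k) i * A.mulVec (v k) i ≤ -(γ k * gOne ℓ A (lam k)))
    (hαstar : ∀ k, ∀ β : ℝ, LL ℓ A (lam k + αstar k • v k) ≤ LL ℓ A (lam k + β • v k))
    (hstep : ∀ k, ν * (γ k / Cstep ℓ A (lam k) ^ 4) ≤ α k ∧ α k ≤ αstar k)
    {s t : ℕ} (hst : s ≤ t) :
    LL ℓ A (lam t) ≤ LL ℓ A (lam s) *
      exp (-(ν * (2 - ν) / (2 * Cstep ℓ A (lam s) ^ 6)) * ∑ k ∈ Finset.Ico s t, γ k ^ 2) := by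
  have hpos (k) : 0 < LL ℓ A (lam k) := hℓ.LL_pos hm A (lam k)
  have hC (k) : 0 < Cstep ℓ A (lam k) := (hℓ.cBound_Cstep A (lam k)).pos
  have hrate : 0 ≤ ν * (2 - ν) := mul_nonneg hν.1 (sub_nonneg.2 hν.2)
  have hcontract (k) : LL ℓ A (lam (k + 1)) ≤
      LL ℓ A (lam k) * (1 - ν * (2 - ν) / (2 * Cstep ℓ A (lam k) ^ 6) * γ k ^ 2) := by
    rw [hlam]
    exact hℓ.LL_add_smul_le_mul_one_sub (hv k) hν (hγ k) (hedge k) (hαstar k) (hstep k).1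
      (hstep k).2
  have hanti : Antitone fun k ↦ LL ℓ A (lam k) := antitone_nat_of_succ_le fun k ↦
    (hcontract k).trans <| mul_le_of_le_one_right (hpos k).le <| sub_le_self _ <| by
      have := hC k
      positivity
  rw [neg_mul, Finset.mul_sum]
  refine le_mul_exp_neg_sum_of_le_mul_one_sub hst (fun k _ ↦ (hpos k).le) fun k hk ↦
    (hcontract k).trans ?_
  have := hC k
  have := hpos k
  have hCk : Cstep ℓ A (lam k) ≤ Cstep ℓ A (lam s) := hℓ.Cstep_le_Cstep hm (hanti hk)
  gcongr

/-- risk convergence for steps between the quadratic-upper-bound step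
and the shrunk optimal step. -/
theorem risk_conv_qub_opt {m n : ℕ} (hm : 0 < m) (hn : 0 < n)
    (A : Matrix (Fin m) (Fin n) ℝ) (hA : ∀ i j, |A i j| ≤ 1)
    (ℓ : ℝ → ℝ) (hℓ : MemL ℓ)
    (ν : ℝ) (hν : ν ∈ Set.Ioc (0:ℝ) 1)
    (lam : ℕ → Fin n → ℝ) (α : ℕ → ℝ) (v : ℕ → Fin n → ℝ)
    (hseq : IsBoostSeq ℓ A lam α v)
    (αstar : ℕ → ℝ)
    (hαstar : ∀ i : ℕ, 1 ≤ i → ∀ β : ℝ,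
      LL ℓ A (lam (i-1) + αstar i • v i) ≤ LL ℓ A (lam (i-1) + β • v i))
    (hstep : ∀ i : ℕ, 1 ≤ i →
      ν * (gammaHat ℓ A (lam (i-1)) / (Cstep ℓ A (lam (i-1)))^4) ≤ α i ∧
      α i ≤ ν * αstar i)
    (t₀ t : ℕ) (ht : t₀ < t) :
    LL ℓ A (lam t) ≤ LL ℓ A (lam t₀) *
      Real.exp (-(ν * (2-ν) / (2 * (Cstep ℓ A (lam t₀))^6)) *
        ∑ i ∈ Finset.Icc (t₀+1) t, (gammaHat ℓ A (lam (i-1)))^2) := by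
  rw [← Finset.Ico_add_one_right_eq_Icc, ← Finset.sum_Ico_add']
  have hk (k : ℕ) : 1 ≤ k + 1 := k.succ_pos
  exact risk_conv_qub_opt_general hm A hℓ ⟨hν.1.le, hν.2.trans one_le_two⟩
    (v := fun k ↦ v (k + 1)) (α := fun k ↦ α (k + 1)) (αstar := fun k ↦ αstar (k + 1))
    (γ := fun k ↦ gammaHat ℓ A (lam k))
    (fun k ↦ hseq.2.1 (k + 1) (hk k)) (fun k ↦ hseq.abs_mulVec_le_one hA (hk k))
    (fun _ ↦ gammaHat_nonneg) (fun k ↦ (hseq.sum_gradL_mul_mulVec hm hℓ (hk k)).le)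
    (fun k ↦ hαstar (k + 1) (hk k))
    (fun k ↦ (hstep (k + 1) (hk k)).imp_right (le_of_qub_le_of_le_mul hν (hstep (k + 1) (hk k)).1))
    ht.le
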